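/- arXiv:0905.0928 — 3 statements merged into one kernel-verified Lean document; each statement's English description precedes it below -/
import Mathlib

section
/- Let m ≥ 1, q = m(m+3)/2 − 1, and let f : ℝ^m → ℝ^q be smooth. Assume: (i) at every point x ∈ ℝ^m the m + m(m+1)/2 vectors ∂_α f(x) (1 ≤ α ≤ m) and ∂_{αβ} f(x) (1 ≤ α ≤ β ≤ m) span ℝ^q; (ii) λ^α, λ^{αβ} = λ^{βα} : ℝ^m → ℝ are smooth functions, not all vanishing simultaneously at any point, with Σ_α λ^α ∂_α f + Σ_{α,β} λ^{αβ} ∂_{αβ} f = 0 identically. If smooth functions h_α and δg_{αβ} = δg_{βα} on ℝ^m satisfy the compatibility condition 2 Σ_α λ^α h_α + Σ_{α,β} λ^{αβ} (∂_α h_β + ∂_β h_α − δg_{αβ}) = 0 identically, then there exists a unique smooth map δf : ℝ^m → ℝ^q with ⟨∂_α f, δf⟩ = h_α and ⟨∂_{αβ} f, δf⟩ = (∂_α h_β + ∂_β h_α − δg_{αβ})/2 for all α, β; in particular δf satisfies ⟨∂_α f, ∂_β δf⟩ + ⟨∂_β f, ∂_α δf⟩ = δg_{αβ} for all α, β. 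-/
/-- The partial derivative of a map `f : ℝ^m → E` with respect to the `α`-th coordinate,
taken pointwise. -/
noncomputable def pd {m : ℕ} {E : Type*} [NormedAddCommGroup E] [NormedSpace ℝ E]
    (α : Fin m) (f : EuclideanSpace ℝ (Fin m) → E) :
    EuclideanSpace ℝ (Fin m) → E :=
  fun x => fderiv ℝ f x (EuclideanSpace.single α 1)

lemma aux_solve {ι E : Type*} [Fintype ι] [NormedAddCommGroup E] [InnerProductSpace ℝ E]
    [FiniteDimensional ℝ E] (V : ι → E) (hV : Submodule.span ℝ (Set.range V) = ⊤)
    (hcard : Fintype.card ι = Module.finrank ℝ E + 1)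
    (c b : ι → ℝ) (hc : c ≠ 0) (hcV : ∑ i, c i • V i = 0) (hcb : ∑ i, c i * b i = 0) :
    ∃ w : E, ∀ i, inner ℝ (V i) w = b i := by
  classical
  let L : (ι → ℝ) →ₗ[ℝ] E := Fintype.linearCombination ℝ V
  let φ : (ι → ℝ) →ₗ[ℝ] ℝ := Fintype.linearCombination ℝ b
  have hL : LinearMap.range L = ⊤ := by
    rw [← hV]; exact Fintype.range_linearCombination ℝ V
  have hk : Module.finrank ℝ (LinearMap.ker L) = 1 := by
    have := LinearMap.finrank_range_add_finrank_ker L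
    rw [hL, finrank_top, Module.finrank_fintype_fun_eq_card, hcard] at this
    omega
  have hcL : c ∈ LinearMap.ker L := by
    simpa [L, Fintype.linearCombination_apply] using hcV
  have hφ : ∀ a ∈ LinearMap.ker L, φ a = 0 := by
    intro a ha
    have hc' : (⟨c, hcL⟩ : LinearMap.ker L) ≠ 0 := by
      intro h; exact hc (congrArg Subtype.val h)
    obtain ⟨t, ht⟩ := (finrank_eq_one_iff_of_nonzero' _ hc').1 hk ⟨a, ha⟩
    have : a = t • c := (congrArg Subtype.val ht).symm
    rw [this, map_smul]
    have : φ c = 0 := by simpa [φ, Fintype.linearCombination_apply] using hcb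
    rw [this, smul_zero]
  obtain ⟨g, hg⟩ := L.exists_rightInverse_of_surjective hL
  let ψ : E →ₗ[ℝ] ℝ := φ ∘ₗ g
  refine ⟨(InnerProductSpace.toDual ℝ E).symm (LinearMap.toContinuousLinearMap ψ), fun i => ?_⟩
  rw [real_inner_comm, InnerProductSpace.toDual_symm_apply]
  have h1 : L (Pi.single i 1) = V i := by simp [L]
  have h2 : φ (Pi.single i 1) = b i := by simp [φ]
  have h3 := hφ (g (V i) - Pi.single i 1) (by
    have : L (g (V i)) = V i := LinearMap.congr_fun hg (V i)
    simp [LinearMap.mem_ker, this, h1])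
  rw [map_sub, h2] at h3
  simpa [ψ] using sub_eq_zero.1 h3

lemma aux_unique {ι E : Type*} [NormedAddCommGroup E] [InnerProductSpace ℝ E]
    (V : ι → E) (hV : Submodule.span ℝ (Set.range V) = ⊤) (w : E)
    (hw : ∀ i, inner ℝ (V i) w = 0) : w = 0 := by
  have : ∀ v ∈ Submodule.span ℝ (Set.range V), inner ℝ v w = 0 := by
    intro v hv
    induction hv using Submodule.span_induction with
    | mem x hx => obtain ⟨i, rfl⟩ := hx; exact hw i
    | zero => simp
    | add x y _ _ hx hy => rw [inner_add_left, hx, hy, add_zero]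
    | smul a x _ hx => rw [real_inner_smul_left, hx, mul_zero]
  exact inner_self_eq_zero.1 (this w (hV ▸ Submodule.mem_top))

lemma aux_smooth {ι X E : Type*} [Fintype ι] [NormedAddCommGroup X] [NormedSpace ℝ X]
    [NormedAddCommGroup E] [InnerProductSpace ℝ E] [FiniteDimensional ℝ E]
    (V : ι → X → E) (hVs : ∀ i, ContDiff ℝ (⊤ : ℕ∞) (V i))
    (hV : ∀ x, Submodule.span ℝ (Set.range fun i => V i x) = ⊤)
    (b : ι → X → ℝ) (hb : ∀ i, ContDiff ℝ (⊤ : ℕ∞) (b i)) (w : X → E)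
    (hw : ∀ x i, inner ℝ (V i x) (w x) = b i x) : ContDiff ℝ (⊤ : ℕ∞) w := by
  have : CompleteSpace E := FiniteDimensional.complete ℝ E
  let T : X → E →L[ℝ] E := fun x => ∑ i, (innerSL ℝ (V i x)).smulRight (V i x)
  have hT : ∀ x v, T x v = ∑ i, (inner ℝ (V i x) v : ℝ) • V i x := by
    intro x v; simp [T]
  have hTs : ContDiff ℝ (⊤ : ℕ∞) T := by
    refine ContDiff.sum fun i _ => ?_
    exact ContDiff.smulRight ((innerSL ℝ (E := E)).contDiff.comp (hVs i)) (hVs i)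
  have hinj : ∀ x, Function.Injective (T x) := by
    intro x
    rw [injective_iff_map_eq_zero]
    intro v hv
    apply aux_unique _ (hV x) v
    have h0 : inner ℝ (T x v) v = 0 := by rw [hv, inner_zero_left]
    rw [hT, sum_inner] at h0
    simp only [real_inner_smul_left] at h0
    intro i
    have := (Finset.sum_eq_zero_iff_of_nonneg (fun i _ => mul_self_nonneg _)).1 h0 i (Finset.mem_univ i)
    exact mul_self_eq_zero.1 this
  have hunit : ∀ x, IsUnit (T x) := by
    intro x
    rw [ContinuousLinearMap.isUnit_iff_bijective]
    exact ⟨hinj x, (LinearMap.injective_iff_surjective (f := (T x : E →ₗ[ℝ] E))).1 (hinj x)⟩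
  have hweq : w = fun x => (Ring.inverse (T x)) (∑ i, b i x • V i x) := by
    funext x
    have h1 : T x (w x) = ∑ i, b i x • V i x := by
      rw [hT]; simp only [hw]
    rw [← h1, ← ContinuousLinearMap.mul_apply, Ring.inverse_mul_cancel _ (hunit x)]
    rfl
  rw [hweq]
  refine ContDiff.clm_apply ?_ (ContDiff.sum fun i _ => (hb i).smul (hVs i))
  rw [contDiff_iff_contDiffAt]
  intro x
  obtain ⟨u, hu⟩ := hunit x
  have := contDiffAt_ringInverse ℝ (n := ((⊤ : ℕ∞) : WithTop ℕ∞)) u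
  rw [hu] at this
  exact this.comp x hTs.contDiffAt

lemma aux_out {A B : Type*} (G : A → A → B) (hG : ∀ a b, G a b = G b a) (a b : A) :
    G (Quot.out s(a, b)).1 (Quot.out s(a, b)).2 = G a b := by
  have h : s((Quot.out s(a, b)).1, (Quot.out s(a, b)).2) = s(a, b) := Quot.out_eq s(a, b)
  rcases Sym2.eq_iff.1 h with ⟨h1, h2⟩ | ⟨h1, h2⟩
  · rw [h1, h2]
  · rw [h1, h2, hG]

lemma aux_sum {A B : Type*} [Fintype A] [DecidableEq A] [AddCommGroup B] [Module ℝ B]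
    (l : A → A → ℝ) (G : A → A → B) (hG : ∀ a b, G a b = G b a) :
    ∑ s : Sym2 A, (∑ p : A × A with s(p.1, p.2) = s, l p.1 p.2) •
      G (Quot.out s).1 (Quot.out s).2 = ∑ a, ∑ b, l a b • G a b := by
  rw [← Fintype.sum_prod_type' (fun a b => l a b • G a b),
    ← Finset.sum_fiberwise (s := Finset.univ) (g := fun p : A × A => s(p.1, p.2))]
  refine Finset.sum_congr rfl fun s _ => ?_
  rw [Finset.sum_smul]
  refine Finset.sum_congr rfl fun p hp => ?_
  rw [Finset.mem_filter] at hp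
  rw [← hp.2, aux_out G hG]

lemma pd_contDiff {m : ℕ} {E : Type*} [NormedAddCommGroup E] [NormedSpace ℝ E]
    (α : Fin m) {f : EuclideanSpace ℝ (Fin m) → E} (hf : ContDiff ℝ (⊤ : ℕ∞) f) :
    ContDiff ℝ (⊤ : ℕ∞) (pd α f) := by
  have := hf.fderiv_right (m := ((⊤ : ℕ∞) : WithTop ℕ∞)) (by simp)
  exact this.clm_apply contDiff_const

lemma pd_comm {m : ℕ} {E : Type*} [NormedAddCommGroup E] [NormedSpace ℝ E]
    (α β : Fin m) {f : EuclideanSpace ℝ (Fin m) → E} (hf : ContDiff ℝ (⊤ : ℕ∞) f) (x) :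
    pd α (pd β f) x = pd β (pd α f) x := by
  have h1 := hf.fderiv_right (m := ((⊤ : ℕ∞) : WithTop ℕ∞)) (by simp)
  have hd : DifferentiableAt ℝ (fderiv ℝ f) x := (h1.differentiable (by simp)) x
  have key : ∀ a b : Fin m, pd a (pd b f) x =
      fderiv ℝ (fderiv ℝ f) x (EuclideanSpace.single a 1) (EuclideanSpace.single b 1) := by
    intro a b
    unfold pd
    rw [fderiv_clm_apply hd (differentiableAt_const _)]
    simp
  rw [key, key]
  have hs : IsSymmSndFDerivAt ℝ f x :=
    hf.contDiffAt.isSymmSndFDerivAt (by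
      simp only [minSmoothness_of_isRCLikeNormedField]; exact WithTop.coe_le_coe.2 (le_top : (2 : ℕ∞) ≤ ⊤))
  exact hs _ _

/-- For `q = m(m+3)/2 − 1`, if the first and second partial derivatives of the smooth map
`f : ℝ^m → ℝ^q` span `ℝ^q` at every point, and `λ^α, λ^{αβ}` are smooth functions, never all
vanishing simultaneously, with `Σ_α λ^α ∂_α f + Σ_{α,β} λ^{αβ} ∂_{αβ} f = 0`, then whenever
smooth functions `h_α, δg_{αβ}` satisfy the compatibility condition
`2 Σ_α λ^α h_α + Σ_{α,β} λ^{αβ} (∂_α h_β + ∂_β h_α − δg_{αβ}) = 0`, there exists a unique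
smooth `δf : ℝ^m → ℝ^q` with `⟨∂_α f, δf⟩ = h_α` and
`⟨∂_{αβ} f, δf⟩ = (∂_α h_β + ∂_β h_α − δg_{αβ})/2`; in particular this `δf` solves the
linearized isometric-immersion equation. -/
theorem exists_unique_solution {m q : ℕ} (hm : 1 ≤ m) (hq : q = m * (m + 3) / 2 - 1)
    (f : EuclideanSpace ℝ (Fin m) → EuclideanSpace ℝ (Fin q))
    (hf : ContDiff ℝ (⊤ : ℕ∞) f)
    (hspan : ∀ x : EuclideanSpace ℝ (Fin m),
        Submodule.span ℝ
          ({v | ∃ α : Fin m, v = pd α f x}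
            ∪ {v | ∃ α β : Fin m, α ≤ β ∧ v = pd α (pd β f) x}) = ⊤)
    (lam1 : Fin m → EuclideanSpace ℝ (Fin m) → ℝ)
    (lam2 : Fin m → Fin m → EuclideanSpace ℝ (Fin m) → ℝ)
    (hlam1 : ∀ α, ContDiff ℝ (⊤ : ℕ∞) (lam1 α))
    (hlam2 : ∀ α β, ContDiff ℝ (⊤ : ℕ∞) (lam2 α β))
    (hlam2sym : ∀ α β, lam2 α β = lam2 β α)
    (hlamne : ∀ x : EuclideanSpace ℝ (Fin m),
        (∃ α, lam1 α x ≠ 0) ∨ (∃ α β, lam2 α β x ≠ 0))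
    (hrel : ∀ x : EuclideanSpace ℝ (Fin m),
        ∑ α, lam1 α x • pd α f x + ∑ α, ∑ β, lam2 α β x • pd α (pd β f) x = 0)
    (h : Fin m → EuclideanSpace ℝ (Fin m) → ℝ)
    (hh : ∀ α, ContDiff ℝ (⊤ : ℕ∞) (h α))
    (δg : Fin m → Fin m → EuclideanSpace ℝ (Fin m) → ℝ)
    (hδg : ∀ α β, ContDiff ℝ (⊤ : ℕ∞) (δg α β))
    (hδgsym : ∀ α β, δg α β = δg β α)
    (hcomp : ∀ x : EuclideanSpace ℝ (Fin m),
        2 * ∑ α, lam1 α x * h α x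
          + ∑ α, ∑ β, lam2 α β x * (pd α (h β) x + pd β (h α) x - δg α β x) = 0) :
    (∃! δf : EuclideanSpace ℝ (Fin m) → EuclideanSpace ℝ (Fin q),
        ContDiff ℝ (⊤ : ℕ∞) δf
        ∧ (∀ α : Fin m, ∀ x, (inner ℝ (pd α f x) (δf x) : ℝ) = h α x)
        ∧ (∀ α β : Fin m, ∀ x,
            (inner ℝ (pd α (pd β f) x) (δf x) : ℝ)
              = (pd α (h β) x + pd β (h α) x - δg α β x) / 2))
    ∧ (∀ δf : EuclideanSpace ℝ (Fin m) → EuclideanSpace ℝ (Fin q),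
        (ContDiff ℝ (⊤ : ℕ∞) δf
          ∧ (∀ α : Fin m, ∀ x, (inner ℝ (pd α f x) (δf x) : ℝ) = h α x)
          ∧ (∀ α β : Fin m, ∀ x,
              (inner ℝ (pd α (pd β f) x) (δf x) : ℝ)
                = (pd α (h β) x + pd β (h α) x - δg α β x) / 2)) →
        ∀ α β : Fin m, ∀ x,
          (inner ℝ (pd α f x) (pd β δf x) : ℝ) + (inner ℝ (pd β f x) (pd α δf x) : ℝ)
            = δg α β x) := by

  classical
  let H : Fin m → Fin m → EuclideanSpace ℝ (Fin m) → ℝ :=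
    fun α β x => (pd α (h β) x + pd β (h α) x - δg α β x) / 2
  have hHsym : ∀ x α β, H α β x = H β α x := by
    intro x α β; simp only [H]; rw [hδgsym α β]; ring
  have hHs : ∀ α β, ContDiff ℝ (⊤ : ℕ∞) (H α β) := fun α β =>
    (((pd_contDiff α (hh β)).add (pd_contDiff β (hh α))).sub (hδg α β)).div_const 2
  let V : Fin m ⊕ Sym2 (Fin m) → EuclideanSpace ℝ (Fin m) → EuclideanSpace ℝ (Fin q) :=
    Sum.elim (fun α => pd α f) (fun s => pd (Quot.out s).1 (pd (Quot.out s).2 f))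
  let b : Fin m ⊕ Sym2 (Fin m) → EuclideanSpace ℝ (Fin m) → ℝ :=
    Sum.elim h (fun s => H (Quot.out s).1 (Quot.out s).2)
  have hVs : ∀ i, ContDiff ℝ (⊤ : ℕ∞) (V i) := by
    rintro (α | s)
    · exact pd_contDiff _ hf
    · exact pd_contDiff _ (pd_contDiff _ hf)
  have hbs : ∀ i, ContDiff ℝ (⊤ : ℕ∞) (b i) := by
    rintro (α | s)
    · exact hh α
    · exact hHs _ _
  have hV2 : ∀ x α β, V (Sum.inr s(α, β)) x = pd α (pd β f) x := fun x α β =>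
    aux_out (fun α β => pd α (pd β f) x) (fun a b => pd_comm a b hf x) α β
  have hb2 : ∀ x α β, b (Sum.inr s(α, β)) x = H α β x := fun x α β =>
    aux_out (fun α β => H α β x) (hHsym x) α β
  have hV : ∀ x, Submodule.span ℝ (Set.range fun i => V i x) = ⊤ := by
    intro x
    rw [eq_top_iff, ← hspan x]
    apply Submodule.span_mono
    rintro v (⟨α, rfl⟩ | ⟨α, β, _, rfl⟩)
    · exact ⟨Sum.inl α, rfl⟩
    · exact ⟨Sum.inr s(α, β), hV2 x α β⟩
  have hcard : Fintype.card (Fin m ⊕ Sym2 (Fin m)) =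
      Module.finrank ℝ (EuclideanSpace ℝ (Fin q)) + 1 := by
    rw [Fintype.card_sum, Sym2.card, Fintype.card_fin, finrank_euclideanSpace_fin, hq,
      Nat.choose_two_right, Nat.add_sub_cancel]
    have e : m * (m + 3) = (m + 1) * m + 2 * m := by ring
    rw [e, Nat.add_mul_div_left _ _ (by norm_num)]
    omega
  have hex : ∀ x, ∃ w : EuclideanSpace ℝ (Fin q), ∀ i, inner ℝ (V i x) w = b i x := by
    intro x
    let c : Fin m ⊕ Sym2 (Fin m) → ℝ := Sum.elim (fun α => lam1 α x)
      (fun s => ∑ p : Fin m × Fin m with s(p.1, p.2) = s, lam2 p.1 p.2 x)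
    refine aux_solve (fun i => V i x) (hV x) hcard c (fun i => b i x) ?_ ?_ ?_
    · intro hc
      rcases hlamne x with ⟨α, hα⟩ | ⟨α, β, hαβ⟩
      · exact hα (congrFun hc (Sum.inl α))
      · have h0 : ∑ p : Fin m × Fin m with s(p.1, p.2) = s(α, β), lam2 p.1 p.2 x = 0 :=
          congrFun hc (Sum.inr s(α, β))
        have h1 : ∀ p ∈ Finset.univ.filter (fun p : Fin m × Fin m => s(p.1, p.2) = s(α, β)),
            lam2 p.1 p.2 x = lam2 α β x := by
          intro p hp
          rcases Sym2.eq_iff.1 (Finset.mem_filter.1 hp).2 with ⟨h1, h2⟩ | ⟨h1, h2⟩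
          · rw [h1, h2]
          · rw [h1, h2, hlam2sym]
        rw [Finset.sum_congr rfl h1, Finset.sum_const, nsmul_eq_mul] at h0
        rcases mul_eq_zero.1 h0 with h2 | h2
        · have h3 := Finset.card_eq_zero.1 (Nat.cast_eq_zero.1 h2)
          have : (α, β) ∈ Finset.univ.filter
              (fun p : Fin m × Fin m => s(p.1, p.2) = s(α, β)) := by simp
          rw [h3] at this
          simp at this
        · exact hαβ h2
    · rw [Fintype.sum_sum_type, ← hrel x, ← aux_sum (fun a b => lam2 a b x)
        (fun α β => pd α (pd β f) x) (fun a b => pd_comm a b hf x)]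
      rfl
    · have e := aux_sum (fun a b => lam2 a b x) (fun α β => H α β x) (hHsym x)
      simp only [smul_eq_mul] at e
      rw [Fintype.sum_sum_type]
      simp only [c, b, Sum.elim_inl, Sum.elim_inr]
      rw [e]
      have h2 := hcomp x
      have h3 : ∑ α, ∑ β, lam2 α β x * (pd α (h β) x + pd β (h α) x - δg α β x)
          = 2 * ∑ α, ∑ β, lam2 α β x * H α β x := by
        simp only [Finset.mul_sum]
        refine Finset.sum_congr rfl fun α _ => Finset.sum_congr rfl fun β _ => ?_
        simp only [H]; ring
      rw [h3] at h2
      linarith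
  choose w hw using hex
  refine ⟨⟨w, ⟨aux_smooth V hVs hV b hbs w hw, fun α x => hw x (Sum.inl α), fun α β x => ?_⟩,
    ?_⟩, ?_⟩
  · rw [← hV2 x α β, hw, hb2]
  · rintro w' ⟨_, h1, h2⟩
    funext x
    rw [← sub_eq_zero]
    apply aux_unique _ (hV x)
    intro i
    rw [inner_sub_right, hw x i]
    rcases i with α | s
    · exact sub_eq_zero.2 (h1 α x)
    · exact sub_eq_zero.2 (h2 _ _ x)
  · rintro w' ⟨hs, h1, h2⟩ α β x
    have key : ∀ a c : Fin m, pd c (h a) x =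
        inner ℝ (pd a f x) (pd c w' x) + inner ℝ (pd c (pd a f) x) (w' x) := by
      intro a c
      have e : h a = fun y => inner ℝ (pd a f y) (w' y) := funext fun y => (h1 a y).symm
      rw [e]
      exact fderiv_inner_apply ℝ ((pd_contDiff a hf).differentiable (by simp) x)
        (hs.differentiable (by simp) x) _
    have k1 := key α β
    have k2 := key β α
    rw [h2] at k1 k2
    rw [hδgsym β α] at k1
    linarith
end

section
/- Let m ≥ 2, let F : ℝ^m → ℝ^{m(m+3)/2} be the canonical free map F(x^1,…,x^m) = (x^1,…,x^m, all quadratic monomials x^α x^β with α ≤ β), and let π : ℝ^{m(m+3)/2} → ℝ^{m(m+3)/2 − 1} be the projection forgetting the coordinate corresponding to the monomial x^1 x^2. Then the composition F_π = π ∘ F satisfies: (i) ∂_{12} F_π ≡ 0 on ℝ^m; (ii) at every point x ∈ ℝ^m the remaining m(m+3)/2 − 1 vectors ∂_α F_π(x) (1 ≤ α ≤ m) and ∂_{αβ} F_π(x) (1 ≤ α ≤ β ≤ m, (α,β) ≠ (1,2)) are linearly independent in ℝ^{m(m+3)/2 − 1}; in particular they span ℝ^{m(m+3)/2 − 1} and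 F_π is an immersion. -/
theorem pcm_coord {m : ℕ} {ι : Type*} [Fintype ι]
    (f : EuclideanSpace ℝ (Fin m) → EuclideanSpace ℝ ι) (hf : Differentiable ℝ f)
    (x v : EuclideanSpace ℝ (Fin m)) (i : ι) :
    (fderiv ℝ f x v) i = fderiv ℝ (fun y => f y i) x v := by
  have h := (((PiLp.proj 2 (𝕜 := ℝ) (fun _ : ι => ℝ) i)).hasFDerivAt.comp x
    (hf x).hasFDerivAt).fderiv
  have h2 : fderiv ℝ (fun y => f y i) x = _ := h
  rw [h2]
  rfl

theorem pcm_lin {m : ℕ} (a : Fin m) (x _v : EuclideanSpace ℝ (Fin m)) :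
    HasFDerivAt (fun y : EuclideanSpace ℝ (Fin m) => y a)
      ((PiLp.proj 2 (𝕜 := ℝ) (fun _ : Fin m => ℝ) a)) x :=
  ((PiLp.proj 2 (𝕜 := ℝ) (fun _ : Fin m => ℝ) a)).hasFDerivAt

theorem pcm_ite {m : ℕ} (a b α β : Fin m) :
    (if b = β then (1 : ℝ) else 0) * (if a = α then 1 else 0)
      + (if a = β then 1 else 0) * (if b = α then 1 else 0) =
    (if a = α ∧ b = β then 1 else 0) + (if b = α ∧ a = β then 1 else 0) := by
  simp only [ite_and, mul_ite, mul_one, mul_zero]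

theorem pcm_card (m : ℕ) (hm : 2 ≤ m) : Fintype.card
        (Fin m ⊕ {p : Fin m × Fin m // p.1 ≤ p.2 ∧ ((p.1 : ℕ), (p.2 : ℕ)) ≠ (0, 1)})
      = m * (m + 3) / 2 - 1 := by
  have h1 : Fintype.card {p : Fin m × Fin m // p.1 ≤ p.2} = (m + 1).choose 2 := by
    rw [← Fintype.card_congr (Sym2.sortEquiv (α := Fin m)), Sym2.card, Fintype.card_fin]
  rw [Fintype.card_subtype] at h1
  have h2 : (Finset.univ.filter fun p : Fin m × Fin m =>
      p.1 ≤ p.2 ∧ ((p.1 : ℕ), (p.2 : ℕ)) ≠ (0, 1)) =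
      (Finset.univ.filter fun p : Fin m × Fin m => p.1 ≤ p.2).erase
        (⟨0, by omega⟩, ⟨1, by omega⟩) := by
    ext ⟨a, b⟩
    simp [Fin.ext_iff]
    tauto
  rw [Fintype.card_sum, Fintype.card_fin, Fintype.card_subtype, h2, Finset.card_erase_of_mem
    (by simp), h1, Nat.choose_two_right]
  have : m * (m + 3) = (m + 1) * (m + 1 - 1) + m * 2 := by
    simp; ring
  rw [this, Nat.add_mul_div_right _ _ (by norm_num)]
  have : 1 ≤ (m + 1) * (m + 1 - 1) / 2 := by
    rw [Nat.le_div_iff_mul_le (by norm_num)]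
    simp; nlinarith
  omega

/-- For `m ≥ 2`, the composition `F_π` of the canonical free map with the projection
forgetting the coordinate of the monomial `x^1 x^2` (its coordinates are indexed by
`Fin m ⊕ {(α,β) | α ≤ β, (α,β) ≠ (1,2)}`, of cardinality `m(m+3)/2 − 1`) satisfies
`∂_{12} F_π ≡ 0`, while the remaining first and second partial derivatives are linearly
independent at every point; in particular they span the target and `F_π` is an immersion. -/
theorem projected_canonical_map (m : ℕ) (hm : 2 ≤ m)
    (Fπ : EuclideanSpace ℝ (Fin m) →
        EuclideanSpace ℝ
          (Fin m ⊕ {p : Fin m × Fin m // p.1 ≤ p.2 ∧ ((p.1 : ℕ), (p.2 : ℕ)) ≠ (0, 1)}))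
    (hFπ : Fπ = fun x => (WithLp.equiv 2 _).symm
        (Sum.elim (fun α : Fin m => x α)
          (fun p : {p : Fin m × Fin m // p.1 ≤ p.2 ∧ ((p.1 : ℕ), (p.2 : ℕ)) ≠ (0, 1)} =>
            x p.1.1 * x p.1.2))) :
    Fintype.card
        (Fin m ⊕ {p : Fin m × Fin m // p.1 ≤ p.2 ∧ ((p.1 : ℕ), (p.2 : ℕ)) ≠ (0, 1)})
      = m * (m + 3) / 2 - 1
    ∧ pd (⟨0, by omega⟩ : Fin m) (pd (⟨1, by omega⟩ : Fin m) Fπ) = 0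
    ∧ ∀ x : EuclideanSpace ℝ (Fin m),
        LinearIndependent ℝ
          (Sum.elim (fun α : Fin m => pd α Fπ x)
            (fun p : {p : Fin m × Fin m // p.1 ≤ p.2 ∧ ((p.1 : ℕ), (p.2 : ℕ)) ≠ (0, 1)} =>
              pd p.1.1 (pd p.1.2 Fπ) x))
        ∧ Submodule.span ℝ
            (Set.range (Sum.elim (fun α : Fin m => pd α Fπ x)
              (fun p : {p : Fin m × Fin m // p.1 ≤ p.2 ∧ ((p.1 : ℕ), (p.2 : ℕ)) ≠ (0, 1)} =>
                pd p.1.1 (pd p.1.2 Fπ) x))) = ⊤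
        ∧ Function.Injective (fderiv ℝ Fπ x) := by
  classical
  refine ⟨pcm_card m hm, ?_⟩
  have hd : Differentiable ℝ Fπ := by
    rw [differentiable_euclidean]
    rintro (β | p)
    · simp only [hFπ]
      exact fun x => (pcm_lin β x x).differentiableAt
    · simp only [hFπ]
      exact fun x => ((pcm_lin p.1.1 x x).mul (pcm_lin p.1.2 x x)).differentiableAt
  have hfl : ∀ x v β, (fderiv ℝ Fπ x v) (Sum.inl β) = v β := by
    intro x v β
    rw [pcm_coord _ hd]
    have : (fun y => Fπ y (Sum.inl β)) = fun y => y β := by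
      rw [hFπ]; rfl
    rw [this, (pcm_lin β x x).fderiv]
    rfl
  have hfr : ∀ x v p, (fderiv ℝ Fπ x v) (Sum.inr p) = x p.1.1 * v p.1.2 + x p.1.2 * v p.1.1 := by
    intro x v p
    rw [pcm_coord _ hd]
    have : (fun y => Fπ y (Sum.inr p)) = fun y => y p.1.1 * y p.1.2 := by
      rw [hFπ]; rfl
    rw [this, ((pcm_lin p.1.1 x x).fun_mul (pcm_lin p.1.2 x x)).fderiv]
    rfl
  have hdp : ∀ α, Differentiable ℝ (pd α Fπ) := by
    intro α
    rw [differentiable_euclidean]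
    rintro (β | p)
    · simp only [pd, hfl]
      exact differentiable_const _
    · simp only [pd, hfr]
      exact fun x => (((pcm_lin p.1.1 x x).mul_const _).add
        ((pcm_lin p.1.2 x x).mul_const _)).differentiableAt
  have hsl : ∀ α β x γ, (pd α (pd β Fπ) x) (Sum.inl γ) = 0 := by
    intro α β x γ
    rw [pd, pcm_coord _ (hdp β)]
    simp only [pd, hfl]
    simp
  have hsr : ∀ α β x p, (pd α (pd β Fπ) x) (Sum.inr p) =
      (if p.1.1 = α ∧ p.1.2 = β then 1 else 0) + (if p.1.2 = α ∧ p.1.1 = β then 1 else 0) := by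
    intro α β x p
    rw [pd, pcm_coord _ (hdp β)]
    simp only [pd, hfr]
    rw [(((pcm_lin p.1.1 x x).mul_const _).fun_add ((pcm_lin p.1.2 x x).mul_const _)).fderiv]
    simp only [add_apply, smul_apply,
      PiLp.proj_apply, smul_eq_mul, PiLp.single_apply]
    exact pcm_ite _ _ _ _
  refine ⟨?_, fun x => ?_⟩
  · funext x
    ext i
    rcases i with γ | ⟨⟨a, b⟩, h1, h2⟩
    · rw [hsl]; rfl
    · rw [hsr]
      have h3 : ¬ ((a : ℕ) = 0 ∧ (b : ℕ) = 1) := by simpa using h2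
      have h4 : (a : ℕ) ≤ b := h1
      simp only [Fin.ext_iff]
      rw [if_neg h3, if_neg (by omega)]
      simp
  have hli : LinearIndependent ℝ
          (Sum.elim (fun α : Fin m => pd α Fπ x)
            (fun p : {p : Fin m × Fin m // p.1 ≤ p.2 ∧ ((p.1 : ℕ), (p.2 : ℕ)) ≠ (0, 1)} =>
              pd p.1.1 (pd p.1.2 Fπ) x)) := by
    rw [Fintype.linearIndependent_iff]
    intro g hg
    rw [Fintype.sum_sum_type] at hg
    simp only [Sum.elim_inl, Sum.elim_inr] at hg
    have hl : ∀ γ, g (Sum.inl γ) = 0 := by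
      intro γ
      have := congrArg (fun w => w (Sum.inl γ)) hg
      simp [hsl] at this
      simpa [pd, hfl, Pi.single_apply] using this
    rintro (γ | q)
    · exact hl γ
    · have := congrArg (fun w => w (Sum.inr q)) hg
      simp only [hl, zero_smul, Finset.sum_const_zero, zero_add, WithLp.ofLp_sum,
        Finset.sum_apply, PiLp.smul_apply, hsr, smul_eq_mul, PiLp.zero_apply] at this
      rw [Finset.sum_eq_single q] at this
      · rw [if_pos ⟨rfl, rfl⟩] at this
        split_ifs at this <;> linarith
      · rintro ⟨⟨a, b⟩, h1, h2⟩ - hne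
        obtain ⟨⟨c, d⟩, h3, h4⟩ := q
        simp only [ne_eq, Subtype.mk.injEq, Prod.mk.injEq] at hne
        simp only at h1 h3 ⊢
        rw [if_neg (by tauto), if_neg]
        · simp
        · rintro ⟨rfl, rfl⟩
          exact hne ⟨le_antisymm h1 h3, le_antisymm h3 h1⟩
      · simp
  refine ⟨hli, ?_, ?_⟩
  · exact hli.span_eq_top_of_card_eq_finrank' (by rw [finrank_euclideanSpace])
  · intro v w h
    ext β
    rw [← hfl x v β, ← hfl x w β, h]
end

section
/- Let g, h : ℝ → ℝ² be free maps (g'(t), g''(t) linearly independent for every t, and likewise h'(t), h''(t)) and let F : ℝ² → ℝ⁴ be defined by F(x,y) = (g(x), h(y)). Then the linearization of the pullback-metric operator at F is surjective: for every triple of smooth functions δg_{xx}, δg_{xy}, δg_{yy} : ℝ² → ℝ there exists a smooth map δf : ℝ² → ℝ⁴ such that ⟨∂_α F, ∂_β δf⟩ + ⟨∂_β F, ∂_α δf⟩ = δg_{αβ} on ℝ² for all α, β ∈ {x, y} (with δg_{yx} := δg_{xy}). -/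
open MeasureTheory Set Filter Topology

abbrev E2 := EuclideanSpace ℝ (Fin 2)

lemma hasFDerivAt_param {G : Type} [NormedAddCommGroup G] [NormedSpace ℝ G]
    {Φ : E2 × ℝ → G} (hΦ : ContDiff ℝ 1 Φ) (x : E2) :
    HasFDerivAt (fun p => ∫ t in (0:ℝ)..1, Φ (p, t))
      (∫ t in (0:ℝ)..1, (fderiv ℝ Φ (x, t)).comp (ContinuousLinearMap.inl ℝ E2 ℝ)) x := by
  have hc : Continuous Φ := hΦ.continuous
  have hd : Continuous (fun q : E2 × ℝ =>
      (fderiv ℝ Φ q).comp (ContinuousLinearMap.inl ℝ E2 ℝ)) :=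
    (hΦ.continuous_fderiv one_ne_zero).clm_comp continuous_const
  have hK : IsCompact (Metric.closedBall x 1 ×ˢ Icc (0:ℝ) 1) :=
    (isCompact_closedBall x 1).prod isCompact_Icc
  obtain ⟨C, hC⟩ := hK.exists_bound_of_continuousOn hd.continuousOn
  refine intervalIntegral.hasFDerivAt_integral_of_dominated_of_fderiv_le
    (F := fun p t => Φ (p, t))
    (F' := fun p t => (fderiv ℝ Φ (p, t)).comp (ContinuousLinearMap.inl ℝ E2 ℝ))
    (bound := fun _ => C)
    (Metric.closedBall_mem_nhds x one_pos) ?_ ?_ ?_ ?_ ?_ ?_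
  · exact Eventually.of_forall fun p => (by fun_prop : Continuous fun t : ℝ => Φ (p, t)).aestronglyMeasurable
  · exact (by fun_prop : Continuous fun t : ℝ => Φ (x, t)).intervalIntegrable _ _
  · exact (hd.comp (by fun_prop : Continuous fun t : ℝ => (x, t))).aestronglyMeasurable
  · refine Eventually.of_forall fun t ht p hp => hC (p, t) ⟨hp, ?_⟩
    rw [uIoc_of_le zero_le_one] at ht
    exact ⟨ht.1.le, ht.2⟩
  · exact intervalIntegrable_const
  · refine Eventually.of_forall fun t ht p hp => ?_
    have h1 := (hΦ.differentiable one_ne_zero (p, t)).hasFDerivAt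
    exact h1.comp p (hasFDerivAt_prodMk_left p t)

lemma contDiff_param (n : ℕ) : ∀ {G : Type} [NormedAddCommGroup G] [NormedSpace ℝ G]
    {Φ : E2 × ℝ → G} (_ : ContDiff ℝ (⊤ : ℕ∞) Φ),
    ContDiff ℝ n (fun p => ∫ t in (0:ℝ)..1, Φ (p, t)) := by
  induction n with
  | zero =>
    intro G _ _ Φ hΦ
    refine contDiff_zero.2 ?_
    exact continuous_iff_continuousAt.2 fun x =>
      (hasFDerivAt_param (hΦ.of_le (by norm_cast)) x).continuousAt
  | succ n ih =>
    intro G _ _ Φ hΦ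
    have := contDiff_succ_iff_hasFDerivAt (𝕜 := ℝ) (n := n)
      (f := fun p => ∫ t in (0:ℝ)..1, Φ (p, t))
    push_cast
    refine this.2 ⟨_, ?_, fun x =>
      hasFDerivAt_param (hΦ.of_le (by norm_cast)) x⟩
    refine ih (Φ := fun q => (fderiv ℝ Φ q).comp (ContinuousLinearMap.inl ℝ E2 ℝ)) ?_
    exact (contDiff_infty_iff_fderiv.1 hΦ).2.clm_comp contDiff_const

lemma exists_primitive (k : E2 → ℝ) (hk : ContDiff ℝ (⊤ : ℕ∞) k) :
    ∃ a : E2 → ℝ, ContDiff ℝ (⊤ : ℕ∞) a ∧ ∀ p, pd 1 a p = k p := by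
  let Φ : E2 × ℝ → ℝ := fun q => q.1 1 * k (!₂[q.1 0, q.2 * q.1 1])
  have hΦ : ContDiff ℝ (⊤ : ℕ∞) Φ := by
    have h1 : ContDiff ℝ (⊤ : ℕ∞) (fun q : E2 × ℝ => (!₂[q.1 0, q.2 * q.1 1] : E2)) := by
      rw [contDiff_euclidean]
      intro i
      fin_cases i <;> simp <;> fun_prop
    have h2 := hk.comp h1
    have h3 : ContDiff ℝ (⊤ : ℕ∞) (fun q : E2 × ℝ => q.1 1) := by fun_prop
    exact h3.mul h2
  have ha : ContDiff ℝ (⊤ : ℕ∞) (fun p => ∫ t in (0:ℝ)..1, Φ (p, t)) :=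
    contDiff_infty.2 fun n => contDiff_param n hΦ
  refine ⟨_, ha, fun p => ?_⟩
  have hfd := (ha.differentiable (by simp) p).hasFDerivAt
  have hl := hfd.hasLineDerivAt (EuclideanSpace.single 1 1)
  unfold pd
  refine hl.unique ?_ 
  have hkc : Continuous fun s : ℝ => k (!₂[p 0, s]) := by
    refine hk.continuous.comp ?_
    have : ContDiff ℝ (⊤ : ℕ∞) (fun s : ℝ => (!₂[p 0, s] : E2)) := by
      rw [contDiff_euclidean]
      intro i
      fin_cases i <;> simp <;> fun_prop
    exact this.continuous
  have hftc : HasDerivAt (fun y : ℝ => ∫ s in (0:ℝ)..y, k (!₂[p 0, s])) (k (!₂[p 0, p 1])) (p 1) :=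
    intervalIntegral.integral_hasDerivAt_right (hkc.intervalIntegrable _ _)
      (hkc.stronglyMeasurableAtFilter _ _) hkc.continuousAt
  have hp : (!₂[p 0, p 1] : E2) = p := by
    ext i; fin_cases i <;> simp
  rw [hp] at hftc
  have hsh : HasDerivAt (fun s : ℝ => p 1 + s) 1 0 := by
    simpa using (hasDerivAt_id (0:ℝ)).const_add (p 1)
  have hcomp : HasDerivAt (fun s : ℝ => ∫ r in (0:ℝ)..(p 1 + s), k (!₂[p 0, r])) (k p * 1) 0 :=
    HasDerivAt.comp (h₂ := fun y : ℝ => ∫ s in (0:ℝ)..y, k (!₂[p 0, s])) (0:ℝ)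
      (by simpa using hftc) hsh
  rw [mul_one] at hcomp
  refine hcomp.congr_of_eventuallyEq (Eventually.of_forall fun s => ?_)
  simp only [Φ]
  simp [intervalIntegral.mul_integral_comp_mul_right (f := fun r => k (!₂[p 0, r]))]

lemma det_ne_zero_of_li {v w : E2} (h : LinearIndependent ℝ ![v, w]) :
    v 0 * w 1 - v 1 * w 0 ≠ 0 := by
  intro hD
  rw [LinearIndependent.pair_iff] at h
  have h1 := h (w 1) (-(v 1)) (by ext i; fin_cases i <;> simp <;> linarith)
  have h0 := h (w 0) (-(v 0)) (by ext i; fin_cases i <;> simp <;> linarith)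
  have := h 1 0 (by
    ext i; fin_cases i <;> simp
    · linarith [h0.2]
    · linarith [h1.2])
  simp at this

lemma contDiff_pd {E : Type*} [NormedAddCommGroup E] [NormedSpace ℝ E] (α : Fin 2) {f : E2 → E}
    (hf : ContDiff ℝ (⊤ : ℕ∞) f) : ContDiff ℝ (⊤ : ℕ∞) (pd α f) :=
  (contDiff_infty_iff_fderiv.1 hf).2.clm_apply contDiff_const

lemma pd_mul_add (α i : Fin 2) (c0 c1 : ℝ → ℝ) (u0 u1 : E2 → ℝ)
    (hc0 : Differentiable ℝ c0) (hc1 : Differentiable ℝ c1)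
    (hu0 : Differentiable ℝ u0) (hu1 : Differentiable ℝ u1) (p : E2) :
    pd α (fun p => c0 (p i) * u0 p + c1 (p i) * u1 p) p =
      c0 (p i) * pd α u0 p + c1 (p i) * pd α u1 p
      + (if i = α then 1 else 0) * (deriv c0 (p i) * u0 p + deriv c1 (p i) * u1 p) := by
  have hi : HasFDerivAt (fun p : E2 => p i) (EuclideanSpace.proj i : E2 →L[ℝ] ℝ) p :=
    (EuclideanSpace.proj i : E2 →L[ℝ] ℝ).hasFDerivAt
  have h0 := (hc0 (p i)).hasDerivAt.comp_hasFDerivAt p hi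
  have h1 := (hc1 (p i)).hasDerivAt.comp_hasFDerivAt p hi
  have h := (h0.mul (hu0 p).hasFDerivAt).add (h1.mul (hu1 p).hasFDerivAt)
  have h' := h.fderiv
  unfold pd
  erw [h']
  simp
  split_ifs <;> ring

lemma curve_coord (g : ℝ → E2) (hg : ContDiff ℝ (⊤ : ℕ∞) g) (j : Fin 2) (t : ℝ) :
    deriv (fun t => g t j) t = deriv g t j := by
  have h := (hg.differentiable (by simp) t).hasDerivAt
  have := (EuclideanSpace.proj j : E2 →L[ℝ] ℝ).hasFDerivAt.comp_hasDerivAt t h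
  exact this.deriv

lemma exists_block (g : ℝ → E2) (hg : ContDiff ℝ (⊤ : ℕ∞) g)
    (hfree : ∀ t : ℝ, LinearIndependent ℝ ![deriv g t, deriv (deriv g) t]) (i : Fin 2)
    (a w : E2 → ℝ) (ha : ContDiff ℝ (⊤ : ℕ∞) a) (hw : ContDiff ℝ (⊤ : ℕ∞) w) :
    ∃ u0 u1 : E2 → ℝ, ContDiff ℝ (⊤ : ℕ∞) u0 ∧ ContDiff ℝ (⊤ : ℕ∞) u1 ∧
      (∀ p, deriv g (p i) 0 * pd i u0 p + deriv g (p i) 1 * pd i u1 p = w p / 2) ∧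
      (∀ j, j ≠ i → ∀ p, deriv g (p i) 0 * pd j u0 p + deriv g (p i) 1 * pd j u1 p = pd j a p) := by
  have hg1 : ContDiff ℝ (⊤ : ℕ∞) (deriv g) := (contDiff_infty_iff_deriv.1 hg).2
  have hg2 : ContDiff ℝ (⊤ : ℕ∞) (deriv (deriv g)) := (contDiff_infty_iff_deriv.1 hg1).2
  have hD := fun t => det_ne_zero_of_li (hfree t)
  have hi : ContDiff ℝ (⊤ : ℕ∞) (fun p : E2 => p i) := by fun_prop
  have k1 : ∀ j, ContDiff ℝ (⊤ : ℕ∞) (fun p : E2 => deriv g (p i) j) := fun j =>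
    (contDiff_euclidean.1 hg1 j).comp hi
  have k2 : ∀ j, ContDiff ℝ (⊤ : ℕ∞) (fun p : E2 => deriv (deriv g) (p i) j) := fun j =>
    (contDiff_euclidean.1 hg2 j).comp hi
  let b : E2 → ℝ := fun p => pd i a p - w p / 2
  have hb : ContDiff ℝ (⊤ : ℕ∞) b := (contDiff_pd i ha).sub (hw.div_const 2)
  let D : E2 → ℝ := fun p => deriv g (p i) 0 * deriv (deriv g) (p i) 1
    - deriv g (p i) 1 * deriv (deriv g) (p i) 0
  have hDD : ContDiff ℝ (⊤ : ℕ∞) D := ((k1 0).mul (k2 1)).sub ((k1 1).mul (k2 0))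
  have hD0 : ∀ p, D p ≠ 0 := fun p => hD (p i)
  let u0 : E2 → ℝ := fun p => (a p * deriv (deriv g) (p i) 1 - b p * deriv g (p i) 1) / D p
  let u1 : E2 → ℝ := fun p => (b p * deriv g (p i) 0 - a p * deriv (deriv g) (p i) 0) / D p
  have hu0 : ContDiff ℝ (⊤ : ℕ∞) u0 := ((ha.mul (k2 1)).sub (hb.mul (k1 1))).div hDD hD0
  have hu1 : ContDiff ℝ (⊤ : ℕ∞) u1 := ((hb.mul (k1 0)).sub (ha.mul (k2 0))).div hDD hD0
  have e1 : (fun p => deriv g (p i) 0 * u0 p + deriv g (p i) 1 * u1 p) = a := by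
    funext p
    have := hD0 p
    simp only [u0, u1]
    field_simp
    simp only [D]
    ring
  have e2 : ∀ p, deriv (deriv g) (p i) 0 * u0 p + deriv (deriv g) (p i) 1 * u1 p = b p := by
    intro p
    have := hD0 p
    simp only [u0, u1]
    field_simp
    simp only [D]
    ring
  have key := fun α p => pd_mul_add α i (fun t => deriv g t 0) (fun t => deriv g t 1) u0 u1
    ((contDiff_euclidean.1 hg1 0).differentiable (by simp))
    ((contDiff_euclidean.1 hg1 1).differentiable (by simp))
    (hu0.differentiable (by simp)) (hu1.differentiable (by simp)) p
  simp only [curve_coord _ hg1, e2, e1] at key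
  refine ⟨u0, u1, hu0, hu1, fun p => ?_, fun j hj p => ?_⟩
  · have := key i p
    simp [b] at this
    linarith
  · have := key j p
    rw [if_neg hj.symm] at this
    linarith

lemma pd_coord (f : E2 → EuclideanSpace ℝ (Fin 4)) (hf : Differentiable ℝ f) (α : Fin 2)
    (j : Fin 4) (p : E2) : pd α f p j = pd α (fun p => f p j) p := by
  have := ((EuclideanSpace.proj j : EuclideanSpace ℝ (Fin 4) →L[ℝ] ℝ).hasFDerivAt).comp p
    (hf p).hasFDerivAt
  unfold pd
  erw [this.fderiv]
  rfl

lemma pd_curve (c : ℝ → E2) (hc : ContDiff ℝ (⊤ : ℕ∞) c) (α i j : Fin 2) (p : E2) :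
    pd α (fun p : E2 => c (p i) j) p = if i = α then deriv c (p i) j else 0 := by
  have h := pd_mul_add α i (fun t => c t j) (fun _ => 0) (fun _ => 1) (fun _ => 0)
    ((contDiff_euclidean.1 hc j).differentiable (by simp)) (by fun_prop) (by fun_prop)
    (by fun_prop) p
  simp only [curve_coord _ hc] at h
  simpa [pd] using h

/-- If `g, h : ℝ → ℝ²` are free maps and `F(x,y) = (g(x), h(y)) : ℝ² → ℝ⁴`, then the
linearization of the pullback-metric operator at `F` is surjective: for all smooth
`δg_{xx}, δg_{xy}, δg_{yy}` there is a smooth `δf : ℝ² → ℝ⁴` with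
`⟨∂_α F, ∂_β δf⟩ + ⟨∂_β F, ∂_α δf⟩ = δg_{αβ}` for all `α, β ∈ {x,y}`
(with `δg_{yx} := δg_{xy}`). -/
theorem linearization_surjective_at_product_of_free_curves
    (g h : ℝ → EuclideanSpace ℝ (Fin 2))
    (hg : ContDiff ℝ (⊤ : ℕ∞) g) (hh : ContDiff ℝ (⊤ : ℕ∞) h)
    (hgfree : ∀ t : ℝ, LinearIndependent ℝ ![deriv g t, deriv (deriv g) t])
    (hhfree : ∀ t : ℝ, LinearIndependent ℝ ![deriv h t, deriv (deriv h) t])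
    (F : EuclideanSpace ℝ (Fin 2) → EuclideanSpace ℝ (Fin 4))
    (hF : F = fun p => (WithLp.equiv 2 (Fin 4 → ℝ)).symm
        ![g (p 0) 0, g (p 0) 1, h (p 1) 0, h (p 1) 1])
    (δgxx δgxy δgyy : EuclideanSpace ℝ (Fin 2) → ℝ)
    (hδgxx : ContDiff ℝ (⊤ : ℕ∞) δgxx) (hδgxy : ContDiff ℝ (⊤ : ℕ∞) δgxy) (hδgyy : ContDiff ℝ (⊤ : ℕ∞) δgyy) :
    ∃ δf : EuclideanSpace ℝ (Fin 2) → EuclideanSpace ℝ (Fin 4),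
      ContDiff ℝ (⊤ : ℕ∞) δf
      ∧ ∀ α β : Fin 2, ∀ p : EuclideanSpace ℝ (Fin 2),
          (inner ℝ (pd α F p) (pd β δf p) : ℝ) + (inner ℝ (pd β F p) (pd α δf p) : ℝ)
            = ![![δgxx, δgxy], ![δgxy, δgyy]] α β p := by
  obtain ⟨a, ha, hay⟩ := exists_primitive δgxy hδgxy
  obtain ⟨u0, u1, hu0, hu1, hux, huy⟩ := exists_block g hg hgfree 0 a δgxx ha hδgxx
  obtain ⟨v0, v1, hv0, hv1, hvy, hvx⟩ := exists_block h hh hhfree 1 (fun _ => 0) δgyy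
    contDiff_const hδgyy
  have hFs : ContDiff ℝ (⊤ : ℕ∞) F := by
    rw [hF, contDiff_euclidean]
    have hp : ∀ i : Fin 2, ContDiff ℝ (⊤ : ℕ∞) (fun p : E2 => p i) := fun i => by fun_prop
    intro i
    fin_cases i
    · exact (contDiff_euclidean.1 hg 0).comp (hp 0)
    · exact (contDiff_euclidean.1 hg 1).comp (hp 0)
    · exact (contDiff_euclidean.1 hh 0).comp (hp 1)
    · exact (contDiff_euclidean.1 hh 1).comp (hp 1)
  let f : E2 → EuclideanSpace ℝ (Fin 4) := fun p => !₂[u0 p, u1 p, v0 p, v1 p]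
  have hfs : ContDiff ℝ (⊤ : ℕ∞) f := by
    rw [contDiff_euclidean]
    intro i
    fin_cases i
    · exact hu0
    · exact hu1
    · exact hv0
    · exact hv1
  have hFd := pd_coord F (hFs.differentiable (by simp))
  have hfd := pd_coord f (hfs.differentiable (by simp))
  have F0 : ∀ α p, pd α F p 0 = if 0 = α then deriv g (p 0) 0 else 0 := fun α p => by
    rw [hFd, hF]; exact pd_curve g hg α 0 0 p
  have F1 : ∀ α p, pd α F p 1 = if 0 = α then deriv g (p 0) 1 else 0 := fun α p => by
    rw [hFd, hF]; exact pd_curve g hg α 0 1 p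
  have F2 : ∀ α p, pd α F p 2 = if 1 = α then deriv h (p 1) 0 else 0 := fun α p => by
    rw [hFd, hF]; exact pd_curve h hh α 1 0 p
  have F3 : ∀ α p, pd α F p 3 = if 1 = α then deriv h (p 1) 1 else 0 := fun α p => by
    rw [hFd, hF]; exact pd_curve h hh α 1 1 p
  have f0 : ∀ α p, pd α f p 0 = pd α u0 p := fun α p => hfd α 0 p
  have f1 : ∀ α p, pd α f p 1 = pd α u1 p := fun α p => hfd α 1 p
  have f2 : ∀ α p, pd α f p 2 = pd α v0 p := fun α p => hfd α 2 p
  have f3 : ∀ α p, pd α f p 3 = pd α v1 p := fun α p => hfd α 3 p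
  refine ⟨f, hfs, fun α β p => ?_⟩
  have q1 := hux p
  have q2 := huy 1 (by decide) p
  have q3 := hvy p
  have q4 := hvx 0 (by decide) p
  rw [hay] at q2
  have q5 : pd (0 : Fin 2) (fun _ : E2 => (0:ℝ)) p = 0 := by simp [pd]
  rw [q5] at q4
  simp only [PiLp.inner_apply, Fin.sum_univ_four, F0, F1, F2, F3, f0, f1, f2, f3]
  fin_cases α <;> fin_cases β <;> simp <;> linarith
end
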